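/- arXiv:2402.04932 — 2 statements merged into one kernel-verified Lean document; each statement's English description precedes it below -/
import Mathlib

section
/- Let X be a nonempty compact metric space equipped with a finite Borel measure μ, let n ≥ 1 be an integer, and let ρ : X → ℝ be a positive 1-Lipschitz function. Let N ≥ 1 be an integer, let (ε_k) be a sequence of positive real numbers converging to 0, and suppose that for each k there is a finite subset Z_k ⊆ X with #Z_k ≥ N such that for every x ∈ X and all real numbers r₁, r₂ with 0 < r₁ < r₂ < ρ(x) we have #(Z_k ∩ B(x, r₁)) · (r₂ − r₁)^n ≤ n! · (μ(B(x, r₂)) + ε_k). Then there exists a point x ∈ X such that: (i) for every real number r with 0 < r ≤ ρ(x) we have r^n ≤ n! · μ(B(x, r)); and (ii) N · ρ(x)^{2n} ≤ 8^n · (n!)² · μ(X)². -/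
/-!
Two consequences of the packing hypothesis drive the proof. Centred at a point `z` of `Z`
and with `r₁ → 0`, it says that `r ^ n ≤ n! (μ (B(z, r)) + ε)`, since `z` itself is counted.
With `r₁ = R / 2` and `r₂ → R ≤ ρ x`, it bounds the number of points of `Z` in `B(x, R / 2)`.

Fix `k`, keep exactly `N` points of `Z_k`, and let `z` minimise `ρ` among them; put `R = ρ z`.
A maximal `R / 2`-separated subset `S` of these points has disjoint balls of radius `R / 4`,
so `#S (R / 4) ^ n ≤ n! (μ X + N ε)`, while the balls of radius `R / 2` about `S` cover all `N`
points and contain at most `n! (μ X + ε) / (R / 2) ^ n` of them each. Multiplying,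
`N R ^ (2 n) ≤ 8 ^ n (n!)² (μ X + N ε) (μ X + ε)` (`exists_point_approx`).
A limit point of these `z`, as `k → ∞`, has both required properties.
-/

open MeasureTheory Metric Filter

/-- A maximal `R`-separated subset of a finite set; it is an `R`-net of that set. -/
lemma exists_separated_net {X : Type*} [MetricSpace X] (Z : Finset X) {R : ℝ} (hR : 0 < R) :
    ∃ S ⊆ Z, (∀ x ∈ S, ∀ y ∈ S, x ≠ y → R ≤ dist x y) ∧ ∀ z ∈ Z, ∃ s ∈ S, dist z s < R := by
  classical
  obtain ⟨S, hS, hmax⟩ := Finset.exists_max_image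
    (Z.powerset.filter fun S => ∀ x ∈ S, ∀ y ∈ S, x ≠ y → R ≤ dist x y) Finset.card
    ⟨∅, by simp⟩
  simp only [Finset.mem_filter, Finset.mem_powerset] at hS hmax
  refine ⟨S, hS.1, hS.2, fun z hz => ?_⟩
  by_contra! hcon
  have hzS : z ∉ S := fun h => by
    have := hcon z h
    rw [dist_self] at this
    linarith
  have h := hmax (insert z S) ⟨Finset.insert_subset hz hS.1, fun x hx y hy hxy => by
    rcases Finset.mem_insert.1 hx with rfl | hxS <;>
      rcases Finset.mem_insert.1 hy with rfl | hyS
    · exact absurd rfl hxy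
    · exact hcon y hyS
    · rw [dist_comm]
      exact hcon x hxS
    · exact hS.2 x hxS y hyS hxy⟩
  rw [Finset.card_insert_of_notMem hzS] at h
  omega

/-- The version of the theorem for a single finite set `Z` and a fixed error `ε`. -/
lemma exists_point_approx {X : Type*} [MetricSpace X] [MeasurableSpace X] [BorelSpace X]
    (μ : Measure X) [IsFiniteMeasure μ] (n : ℕ) (ρ : X → ℝ) (hρpos : ∀ x, 0 < ρ x)
    (N : ℕ) (hN : 1 ≤ N) (ε : ℝ) (hε : 0 < ε) (Z : Finset X) (hZ : N ≤ Z.card)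
    (hpack : ∀ x : X, ∀ r₁ r₂ : ℝ, 0 < r₁ → r₁ < r₂ → r₂ < ρ x →
      ((↑Z ∩ ball x r₁ : Set X).ncard : ℝ) * (r₂ - r₁) ^ n ≤
        (n.factorial : ℝ) * ((μ (ball x r₂)).toReal + ε)) :
    ∃ z : X,
      (∀ r : ℝ, 0 < r → r < ρ z →
        r ^ n ≤ (n.factorial : ℝ) * ((μ (ball z r)).toReal + ε)) ∧
      (N : ℝ) * ρ z ^ (2 * n) ≤ 8 ^ n * (n.factorial : ℝ) ^ 2 *
        (((μ Set.univ).toReal + N * ε) * ((μ Set.univ).toReal + ε)) := by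
  classical
  have hgrow : ∀ z ∈ Z, ∀ r : ℝ, 0 < r → r < ρ z →
      r ^ n ≤ (n.factorial : ℝ) * ((μ (ball z r)).toReal + ε) := by
    intro z hz r hr hrρ
    have hlim : Tendsto (fun t : ℝ => (r - t) ^ n) (nhdsWithin 0 (Set.Ioi 0))
        (nhds ((r - 0) ^ n)) :=
      (Continuous.tendsto (by fun_prop) 0).mono_left nhdsWithin_le_nhds
    rw [sub_zero] at hlim
    refine le_of_tendsto hlim ?_
    filter_upwards [Ioo_mem_nhdsGT hr] with t ht
    refine le_trans ?_ (hpack z t r ht.1 ht.2 hrρ)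
    have hone : (1 : ℝ) ≤ ((↑Z ∩ ball z t : Set X).ncard : ℝ) := by
      have hpos : 0 < (↑Z ∩ ball z t : Set X).ncard :=
        (Set.ncard_pos (Z.finite_toSet.inter_of_left _)).2 ⟨z, hz, mem_ball_self ht.1⟩
      exact_mod_cast hpos
    exact le_mul_of_one_le_left (pow_nonneg (by linarith [ht.2]) n) hone
  obtain ⟨Y, hYZ, hYN⟩ := Finset.exists_subset_card_eq hZ
  have hYne : Y.Nonempty := Finset.card_pos.1 (by omega)
  obtain ⟨z, hzY, hzmin⟩ := Finset.exists_min_image Y ρ hYne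
  refine ⟨z, hgrow z (hYZ hzY), ?_⟩
  have hR : 0 < ρ z := hρpos z
  set R := ρ z
  set V := (μ Set.univ).toReal with hV
  have hV0 : 0 ≤ V := ENNReal.toReal_nonneg
  have hleV : ∀ A : Set X, (μ A).toReal ≤ V := fun A =>
    ENNReal.toReal_mono (measure_ne_top μ _) (measure_mono (Set.subset_univ A))
  obtain ⟨S, hSY, hsep, hnet⟩ := exists_separated_net Y (half_pos hR)
  have hSN : (S.card : ℝ) ≤ N := by
    exact_mod_cast hYN ▸ Finset.card_le_card hSY
  have hfac : (0 : ℝ) ≤ n.factorial := Nat.cast_nonneg _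
  have hsum : ∑ s ∈ S, (μ (ball s (R / 4))).toReal ≤ V := by
    have hdisj : (S : Set X).PairwiseDisjoint fun s => ball s (R / 4) :=
      fun x hx y hy hxy => ball_disjoint_ball (by linarith [hsep x hx y hy hxy])
    have h := measureReal_biUnion_finset (μ := μ) hdisj (fun s _ => measurableSet_ball)
    simp only [Measure.real] at h
    rw [← h]
    exact hleV _
  have hcardS : (S.card : ℝ) * (R / 4) ^ n ≤ n.factorial * (V + N * ε) := by
    calc (S.card : ℝ) * (R / 4) ^ n = ∑ s ∈ S, (R / 4) ^ n := by
          rw [Finset.sum_const, nsmul_eq_mul]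
      _ ≤ ∑ s ∈ S, (n.factorial : ℝ) * ((μ (ball s (R / 4))).toReal + ε) :=
          Finset.sum_le_sum fun s hs => hgrow s (hYZ (hSY hs)) _ (by linarith)
            (by linarith [hzmin s (hSY hs)])
      _ = n.factorial * (∑ s ∈ S, (μ (ball s (R / 4))).toReal + S.card * ε) := by
          rw [← Finset.mul_sum, Finset.sum_add_distrib, Finset.sum_const, nsmul_eq_mul]
      _ ≤ n.factorial * (V + N * ε) := by gcongr
  have hball : ∀ s ∈ S, ((Y.filter fun y => dist y s < R / 2).card : ℝ) * (R / 2) ^ n ≤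
      n.factorial * (V + ε) := by
    intro s hs
    have hlim : Tendsto
        (fun t : ℝ => ((Y.filter fun y => dist y s < R / 2).card : ℝ) * (t - R / 2) ^ n)
        (nhdsWithin R (Set.Iio R))
        (nhds (((Y.filter fun y => dist y s < R / 2).card : ℝ) * (R - R / 2) ^ n)) :=
      (Continuous.tendsto (by fun_prop) R).mono_left nhdsWithin_le_nhds
    rw [sub_half] at hlim
    refine le_of_tendsto hlim ?_
    filter_upwards [Ioo_mem_nhdsLT (half_lt_self hR)] with t ht
    have hp := hpack s (R / 2) t (half_pos hR) ht.1 (ht.2.trans_le (hzmin s (hSY hs)))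
    have hsub : (Y.filter fun y => dist y s < R / 2).card ≤
        (↑Z ∩ ball s (R / 2) : Set X).ncard := by
      rw [← Set.ncard_coe_finset]
      refine Set.ncard_le_ncard ?_ (Z.finite_toSet.inter_of_left _)
      intro y hy
      obtain ⟨hy, hys⟩ := Finset.mem_filter.1 (Finset.mem_coe.1 hy)
      exact ⟨hYZ hy, hys⟩
    have ht0 : 0 ≤ t - R / 2 := by linarith [ht.1]
    calc _ ≤ ((↑Z ∩ ball s (R / 2) : Set X).ncard : ℝ) * (t - R / 2) ^ n := by gcongr
      _ ≤ _ := hp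
      _ ≤ _ := by gcongr; exact hleV _
  have hcover : (N : ℝ) ≤ ∑ s ∈ S, ((Y.filter fun y => dist y s < R / 2).card : ℝ) := by
    have hsub : Y ⊆ S.biUnion fun s => Y.filter fun y => dist y s < R / 2 := by
      intro y hy
      obtain ⟨s, hs, hys⟩ := hnet y hy
      exact Finset.mem_biUnion.2 ⟨s, hs, Finset.mem_filter.2 ⟨hy, hys⟩⟩
    exact_mod_cast hYN ▸ (Finset.card_le_card hsub).trans Finset.card_biUnion_le
  have hcount : (N : ℝ) * (R / 2) ^ n ≤ S.card * (n.factorial * (V + ε)) := by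
    calc (N : ℝ) * (R / 2) ^ n
        ≤ (∑ s ∈ S, ((Y.filter fun y => dist y s < R / 2).card : ℝ)) * (R / 2) ^ n := by
          gcongr
      _ ≤ ∑ s ∈ S, (n.factorial : ℝ) * (V + ε) := by
          rw [Finset.sum_mul]
          exact Finset.sum_le_sum hball
      _ = _ := by rw [Finset.sum_const, nsmul_eq_mul]
  have h8 : R ^ (2 * n) = 8 ^ n * ((R / 2) ^ n * (R / 4) ^ n) := by
    rw [← mul_pow, ← mul_pow, pow_mul]
    congr 1
    ring
  calc (N : ℝ) * R ^ (2 * n) = 8 ^ n * ((N : ℝ) * (R / 2) ^ n * (R / 4) ^ n) := by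
        rw [h8]; ring
    _ ≤ 8 ^ n * (S.card * (n.factorial * (V + ε)) * (R / 4) ^ n) := by gcongr
    _ = 8 ^ n * (n.factorial * (V + ε) * (S.card * (R / 4) ^ n)) := by ring
    _ ≤ 8 ^ n * (n.factorial * (V + ε) * (n.factorial * (V + N * ε))) := by gcongr
    _ = _ := by ring

/-- Metric-measure abstraction of the paper's Theorem 5.1: from separating-filtration
data `Z_k` with at least `N` points and error parameters `ε_k → 0`, one finds a point
`x` satisfying the Euclidean-type ball volume lower bound up to radius `ρ(x)`, together
with the bound `N · ρ(x)^{2n} ≤ 8^n · (n!)² · μ(X)²`. -/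
theorem exists_point_growth_and_counting {X : Type*} [MetricSpace X] [Nonempty X]
    [CompactSpace X] [MeasurableSpace X] [BorelSpace X]
    (μ : Measure X) [IsFiniteMeasure μ]
    (n : ℕ) (hn : 1 ≤ n) (ρ : X → ℝ) (hρpos : ∀ x, 0 < ρ x) (hρ : LipschitzWith 1 ρ)
    (N : ℕ) (hN : 1 ≤ N)
    (εk : ℕ → ℝ) (hεkpos : ∀ k, 0 < εk k) (hεk : Tendsto εk atTop (nhds 0))
    (Zk : ℕ → Finset X) (hZkcard : ∀ k, N ≤ (Zk k).card)
    (hpack : ∀ k : ℕ, ∀ x : X, ∀ r₁ r₂ : ℝ, 0 < r₁ → r₁ < r₂ → r₂ < ρ x →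
      ((↑(Zk k) ∩ ball x r₁ : Set X).ncard : ℝ) * (r₂ - r₁) ^ n ≤
        (n.factorial : ℝ) * ((μ (ball x r₂)).toReal + εk k)) :
    ∃ x : X,
      (∀ r : ℝ, 0 < r → r ≤ ρ x →
        r ^ n ≤ (n.factorial : ℝ) * (μ (ball x r)).toReal) ∧
      (N : ℝ) * ρ x ^ (2 * n) ≤
        8 ^ n * (n.factorial : ℝ) ^ 2 * (μ Set.univ).toReal ^ 2 := by
  choose z hz using fun k => exists_point_approx μ n ρ hρpos N hN (εk k) (hεkpos k) (Zk k)
    (hZkcard k) (hpack k)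
  obtain ⟨x, φ, hφ, hx⟩ := CompactSpace.tendsto_subseq z
  have hε0 : Tendsto (fun j => εk (φ j)) atTop (nhds 0) := hεk.comp hφ.tendsto_atTop
  have hρx : Tendsto (fun j => ρ (z (φ j))) atTop (nhds (ρ x)) :=
    (hρ.continuous.tendsto x).comp hx
  refine ⟨x, fun r hr hrρ => ?_, ?_⟩
  · -- For `t < r`, eventually `ball (z (φ j)) t ⊆ ball x r`; then `j → ∞` and `t → r`.
    have hlim : Tendsto (fun t : ℝ => t ^ n) (nhdsWithin r (Set.Iio r)) (nhds (r ^ n)) :=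
      (Continuous.tendsto (by fun_prop) r).mono_left nhdsWithin_le_nhds
    refine le_of_tendsto hlim ?_
    filter_upwards [Ioo_mem_nhdsLT hr] with t ht
    have hlim' : Tendsto
        (fun j => (n.factorial : ℝ) * ((μ (ball x r)).toReal + εk (φ j))) atTop
        (nhds ((n.factorial : ℝ) * ((μ (ball x r)).toReal + 0))) :=
      (hε0.const_add _).const_mul _
    rw [add_zero] at hlim'
    refine ge_of_tendsto hlim' ?_
    filter_upwards [hρx.eventually_const_lt (ht.2.trans_le hrρ),
      hx.eventually (ball_mem_nhds x (sub_pos.2 ht.2))] with j hj hjx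
    refine ((hz (φ j)).1 t ht.1 hj).trans ?_
    have hsub : ball (z (φ j)) t ⊆ ball x r :=
      ball_subset_ball' (by
        have : dist (z (φ j)) x < r - t := hjx
        linarith)
    gcongr
    exact measure_ne_top μ _
  · have hlim' : Tendsto (fun j => 8 ^ n * (n.factorial : ℝ) ^ 2 *
        (((μ Set.univ).toReal + N * εk (φ j)) * ((μ Set.univ).toReal + εk (φ j)))) atTop
        (nhds (8 ^ n * (n.factorial : ℝ) ^ 2 *
          (((μ Set.univ).toReal + N * 0) * ((μ Set.univ).toReal + 0)))) :=
      (((hε0.const_mul _).const_add _).mul (hε0.const_add _)).const_mul _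
    rw [mul_zero, add_zero, ← pow_two] at hlim'
    exact le_of_tendsto_of_tendsto' ((hρx.pow (2 * n)).const_mul (N : ℝ)) hlim'
      fun j => (hz (φ j)).2
end

section
/- Let X be a metric space equipped with a Borel measure μ, and let a group G act on X by measure-preserving isometries (that is, d(g·y, g·z) = d(y, z) for all g ∈ G and y, z ∈ X, and μ(g·A) = μ(A) for every g ∈ G and every measurable set A). Let a, b ∈ G freely generate a free subgroup of rank 2 (that is, the homomorphism from the free group on two generators sending the generators to a and b is injective). Let x ∈ X and let ℓ, δ > 0 be such that d(x, a·x) ≤ ℓ, d(x, b·x) ≤ ℓ, and d(x, g·x) ≥ 2δ for every element g ≠ 1 of the subgroup generated by a and b. Then for every real number r ≥ δ, we have μ(B(x, r)) ≥ (2 · 3^{⌊(r − δ)/ℓ⌋} − 1) · μ(B(x, δ)). -/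
open MeasureTheory Metric ENNReal Pointwise

/-!
The free group of rank 2 has at least `2 * 3 ^ k - 1` reduced words of length at most `k`
(`exists_reduced_words`): there are four choices for the first letter and three for each later
one. By freeness the corresponding elements `g` of `⟨a, b⟩` are pairwise distinct, so the
separation hypothesis makes the balls `B(g • x, δ) = g • B(x, δ)` pairwise disjoint. Each of
them has measure `μ (B(x, δ))`. A word of length at most `k` moves `x` by at most `k * ℓ`
(`dist_word_smul_le`), so for `k = ⌊(r - δ) / ℓ⌋` all these balls lie in `B(x, r)`, and adding
up their measures gives the estimate.
-/

/-- The counting step for words: prescribing the first letter in `D` and completing it in `m`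
ways, and adding the empty word, gives `1 + #D * m` words. -/
lemma card_insert_nil_cons {α : Type*} [DecidableEq α] (D : Finset α)
    (f : α → Finset (List α)) (m : ℕ) (hf : ∀ d ∈ D, (f d).card = m) :
    (insert [] (D.biUnion fun d => (f d).image (List.cons d))).card = 1 + D.card * m := by
  rw [Finset.card_insert_of_notMem (by simp), Finset.card_biUnion, Finset.sum_congr rfl
    (g := fun _ => m), Finset.sum_const, smul_eq_mul, add_comm]
  · intro d hd
    rw [Finset.card_image_of_injective _ (List.cons_injective), hf d hd]
  · intro d _ e _ hde
    rw [Function.onFun, Finset.disjoint_left]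
    intro w hw hw'
    simp only [Finset.mem_image] at hw hw'
    obtain ⟨u, _, rfl⟩ := hw
    obtain ⟨v, _, hv⟩ := hw'
    exact hde (List.cons.inj hv).1.symm

/-- There are `(3 ^ (n + 1) - 1) / 2 = 1 + 3 + ⋯ + 3 ^ n` words of length at most `n` that can
follow a given letter `c` in a reduced word. -/
lemma exists_reduced_continuations (n : ℕ) : ∀ c : Fin 2 × Bool,
    ∃ S : Finset (List (Fin 2 × Bool)), 2 * S.card + 1 = 3 ^ (n + 1) ∧
      ∀ w ∈ S, w.length ≤ n ∧ FreeGroup.IsReduced (c :: w) := by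
  induction n with
  | zero =>
    intro c
    exact ⟨{[]}, by simp, by simp [FreeGroup.IsReduced]⟩
  | succ n ih =>
    intro c
    choose f hf hf' using ih
    let D : Finset (Fin 2 × Bool) := Finset.univ.filter fun d => c.1 = d.1 → c.2 = d.2
    have hD : D.card = 3 := by
      revert c
      decide
    refine ⟨insert [] (D.biUnion fun d => (f d).image (List.cons d)), ?_, ?_⟩
    · rw [card_insert_nil_cons D f (f c).card
        (fun d _ => by have := hf d; have := hf c; omega), hD]
      have := hf c
      rw [pow_succ]
      omega
    · intro w hw
      simp only [Finset.mem_insert, Finset.mem_biUnion, Finset.mem_image] at hw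
      rcases hw with rfl | ⟨d, hd, u, hu, rfl⟩
      · simp [FreeGroup.IsReduced]
      · have hcd : c.1 = d.1 → c.2 = d.2 := (Finset.mem_filter.mp hd).2
        obtain ⟨h1, h2⟩ := hf' d u hu
        refine ⟨by simpa using h1, ?_⟩
        exact List.IsChain.cons_cons hcd h2

lemma exists_reduced_words (k : ℕ) :
    ∃ S : Finset (List (Fin 2 × Bool)), S.card = 2 * 3 ^ k - 1 ∧
      ∀ w ∈ S, w.length ≤ k ∧ FreeGroup.IsReduced w := by
  cases k with
  | zero => exact ⟨{[]}, by simp, by simp [FreeGroup.IsReduced]⟩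
  | succ n =>
    choose f hf hf' using exists_reduced_continuations n
    refine ⟨insert [] (Finset.univ.biUnion fun d => (f d).image (List.cons d)), ?_, ?_⟩
    · rw [card_insert_nil_cons _ f (f 0).card
        (fun d _ => by have := hf d; have := hf 0; omega)]
      have := hf 0
      simp only [Finset.card_univ, Fintype.card_prod, Fintype.card_fin, Fintype.card_bool]
      omega
    · intro w hw
      simp only [Finset.mem_insert, Finset.mem_biUnion, Finset.mem_image] at hw
      rcases hw with rfl | ⟨d, -, u, hu, rfl⟩
      · simp [FreeGroup.IsReduced]
      · exact ⟨by simpa using (hf' d u hu).1, (hf' d u hu).2⟩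

lemma dist_word_smul_le {X : Type*} [MetricSpace X] {G : Type*} [Group G] [MulAction G X]
    (hiso : ∀ (g : G) (y z : X), dist (g • y) (g • z) = dist y z) {ι : Type*} (s : ι → G)
    (x : X) (ℓ : ℝ) (hs : ∀ i, dist x (s i • x) ≤ ℓ) (w : List (ι × Bool)) :
    dist x (FreeGroup.lift s (FreeGroup.mk w) • x) ≤ w.length * ℓ := by
  rw [FreeGroup.lift_mk]
  induction w with
  | nil => simp
  | cons c w ih =>
    have hc : dist x ((bif c.2 then s c.1 else (s c.1)⁻¹) • x) ≤ ℓ := by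
      rcases c with ⟨i, _ | _⟩
      · rw [← hiso (s i)]
        simpa [dist_comm] using hs i
      · exact hs i
    rw [List.map_cons, List.prod_cons, mul_smul, List.length_cons]
    refine (dist_triangle _ _ _).trans ((add_le_add hc ((hiso _ _ _).trans_le ih)).trans ?_)
    push_cast
    linarith

/-- Radius-parameterized exponential ball-growth estimate: if `a, b` freely generate a
free subgroup of rank 2 of a group acting on `X` by measure-preserving isometries, both
move `x` a distance at most `ℓ`, and every nontrivial element of `⟨a, b⟩` moves `x` a
distance at least `2δ`, then `μ(B(x, r)) ≥ (2·3^{⌊(r − δ)/ℓ⌋} − 1) · μ(B(x, δ))` for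
every real `r ≥ δ`. -/
theorem free_subgroup_ball_growth_radius {X : Type*} [MetricSpace X] [MeasurableSpace X]
    [BorelSpace X] (μ : Measure X)
    {G : Type*} [Group G] [MulAction G X]
    (hiso : ∀ (g : G) (y z : X), dist (g • y) (g • z) = dist y z)
    (hmeas : ∀ (g : G) (A : Set X), MeasurableSet A → μ (g • A) = μ A)
    (a b : G) (hfree : Function.Injective (FreeGroup.lift ![a, b] : FreeGroup (Fin 2) →* G))
    (x : X) (ℓ δ : ℝ) (hℓ : 0 < ℓ) (hδ : 0 < δ)
    (ha : dist x (a • x) ≤ ℓ) (hb : dist x (b • x) ≤ ℓ)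
    (hsep : ∀ g ∈ Subgroup.closure {a, b}, g ≠ 1 → 2 * δ ≤ dist x (g • x)) :
    ∀ r : ℝ, δ ≤ r →
      ((2 * 3 ^ (⌊(r - δ) / ℓ⌋₊) - 1 : ℕ) : ℝ≥0∞) * μ (ball x δ) ≤ μ (ball x r) := by
  intro r hr
  set k := ⌊(r - δ) / ℓ⌋₊ with hk
  have hkr : (k : ℝ) * ℓ ≤ r - δ :=
    (le_div_iff₀ hℓ).mp (Nat.floor_le (div_nonneg (sub_nonneg.mpr hr) hℓ.le))
  obtain ⟨S, hcard, hS⟩ := exists_reduced_words k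
  let φ : List (Fin 2 × Bool) → G := fun w => FreeGroup.lift ![a, b] (FreeGroup.mk w)
  have hs : ∀ i, dist x ((![a, b] : Fin 2 → G) i • x) ≤ ℓ := by
    intro i
    fin_cases i
    · exact ha
    · exact hb
  have hclosure : ∀ u : FreeGroup (Fin 2),
      FreeGroup.lift ![a, b] u ∈ Subgroup.closure {a, b} := by
    intro u
    have h : FreeGroup.lift ![a, b] u ∈ (FreeGroup.lift ![a, b]).range := ⟨u, rfl⟩
    rwa [FreeGroup.range_lift_eq_closure, Matrix.range_cons_cons_empty] at h
  have hball : ∀ g : G, g • ball x δ = ball (g • x) δ := by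
    intro g
    ext y
    rw [Set.mem_smul_set_iff_inv_smul_mem, mem_ball, mem_ball, ← hiso g, smul_inv_smul]
  have hμ : ∀ g : G, μ (ball (g • x) δ) = μ (ball x δ) := fun g => by
    rw [← hball, hmeas g _ measurableSet_ball]
  have hdisj : (S : Set (List (Fin 2 × Bool))).PairwiseDisjoint
      fun w => ball (φ w • x) δ := by
    intro v hv w hw hvw
    have hmk : FreeGroup.mk v ≠ FreeGroup.mk w := by
      intro h
      have h' := FreeGroup.reduce.sound h
      rw [(hS v hv).2.reduce_eq, (hS w hw).2.reduce_eq] at h'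
      exact hvw h'
    apply ball_disjoint_ball
    have h := hsep (FreeGroup.lift ![a, b] ((FreeGroup.mk v)⁻¹ * FreeGroup.mk w)) (hclosure _)
      (by
        rw [Ne, map_eq_one_iff _ hfree, inv_mul_eq_one]
        exact hmk)
    rw [← hiso (φ v), smul_smul, map_mul, map_inv, mul_inv_cancel_left] at h
    linarith
  calc ((2 * 3 ^ k - 1 : ℕ) : ℝ≥0∞) * μ (ball x δ)
      = ∑ w ∈ S, μ (ball (φ w • x) δ) := by
        rw [Finset.sum_congr rfl fun w _ => hμ (φ w), Finset.sum_const, nsmul_eq_mul, hcard]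
    _ = μ (⋃ w ∈ S, ball (φ w • x) δ) :=
        (measure_biUnion_finset hdisj fun _ _ => measurableSet_ball).symm
    _ ≤ μ (ball x r) := by
        refine measure_mono (Set.iUnion₂_subset fun w hw => ball_subset_ball' ?_)
        have h1 : dist x (φ w • x) ≤ w.length * ℓ := dist_word_smul_le hiso _ x ℓ hs w
        have h2 : (w.length : ℝ) * ℓ ≤ k * ℓ := by
          gcongr
          exact (hS w hw).1
        rw [dist_comm]
        linarith
end
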